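/- arXiv:2005.02520 — 3 statements merged into one kernel-verified Lean document; each statement's English description precedes it below -/
import Mathlib

section
/- Let R be a commutative Noetherian ring, let I be a finitely generated flat R-module, and let (S_n)_{n∈ℕ} be a sequence of R-modules equipped with surjective R-linear transition maps t_n : S_{n+1} → S_n. Then the canonical R-linear map I ⊗_R (lim_n S_n) → lim_n (I ⊗_R S_n), determined by x ⊗ (s_n)_n ↦ (x ⊗ s_n)_n, is bijective. -/
/-- The inverse limit of an inverse system of `R`-modules `(S n)` with transition maps
`t n : S (n+1) → S n`, realized as the submodule of compatible families in the product. -/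
def invLim {R : Type*} [CommRing R] {S : ℕ → Type*} [∀ n, AddCommGroup (S n)]
    [∀ n, Module R (S n)] (t : ∀ n, S (n + 1) →ₗ[R] S n) : Submodule R (∀ n, S n) where
  carrier := {s | ∀ n, t n (s (n + 1)) = s n}
  add_mem' := by
    intro a b ha hb n
    simp [ha n, hb n]
  zero_mem' := by
    intro n
    simp
  smul_mem' := by
    intro c a ha n
    simp [ha n]

/-- The canonical map `I ⊗ (lim S n) → lim (I ⊗ S n)`, determined by
`x ⊗ (s n)ₙ ↦ (x ⊗ s n)ₙ`. -/
noncomputable def tensorInvLimMap {R : Type*} [CommRing R]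
    (I : Type*) [AddCommGroup I] [Module R I]
    {S : ℕ → Type*} [∀ n, AddCommGroup (S n)] [∀ n, Module R (S n)]
    (t : ∀ n, S (n + 1) →ₗ[R] S n) :
    TensorProduct R I ↥(invLim t) →ₗ[R]
      ↥(invLim (S := fun n => TensorProduct R I (S n)) (fun n => LinearMap.lTensor I (t n))) :=
  TensorProduct.lift <| LinearMap.mk₂ R
    (fun x s =>
      (⟨fun n => x ⊗ₜ[R] (s : ∀ n, S n) n, fun n => by
          have hs : t n ((s : ∀ n, S n) (n + 1)) = (s : ∀ n, S n) n := s.2 n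
          simp only [LinearMap.lTensor_tmul, hs]⟩ :
        ↥(invLim (S := fun n => TensorProduct R I (S n)) (fun n => LinearMap.lTensor I (t n)))))
    (fun x y s => Subtype.ext (funext fun n => by
      simp [TensorProduct.add_tmul]))
    (fun c x s => Subtype.ext (funext fun n => by
      simp [TensorProduct.smul_tmul']))
    (fun x s s' => Subtype.ext (funext fun n => by
      simp [TensorProduct.tmul_add]))
    (fun c x s => Subtype.ext (funext fun n => by
      simp [TensorProduct.tmul_smul]))

open TensorProduct in
/-- Contraction against a functional. -/
noncomputable def contr {R : Type*} [CommRing R] {I : Type*} [AddCommGroup I] [Module R I]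
    (f : I →ₗ[R] R) (M : Type*) [AddCommGroup M] [Module R M] : I ⊗[R] M →ₗ[R] M :=
  (TensorProduct.lid R M).toLinearMap ∘ₗ LinearMap.rTensor M f

theorem contr_tmul {R : Type*} [CommRing R] {I : Type*} [AddCommGroup I] [Module R I]
    (f : I →ₗ[R] R) {M : Type*} [AddCommGroup M] [Module R M] (x : I) (m : M) :
    contr f M (x ⊗ₜ[R] m) = f x • m := by
  simp [contr]

open TensorProduct in
theorem contr_lTensor {R : Type*} [CommRing R] {I : Type*} [AddCommGroup I] [Module R I]
    (f : I →ₗ[R] R) {M N : Type*} [AddCommGroup M] [Module R M] [AddCommGroup N] [Module R N]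
    (g : M →ₗ[R] N) (z : I ⊗[R] M) :
    contr f N (LinearMap.lTensor I g z) = g (contr f M z) := by
  induction z with
  | zero => simp
  | tmul x y => simp [contr_tmul]
  | add a b ha hb => simp [ha, hb]

open TensorProduct in
theorem contr_sum {R : Type*} [CommRing R] {I : Type*} [AddCommGroup I] [Module R I]
    {k : ℕ} (e : Fin k → I) (f : Fin k → I →ₗ[R] R) (h : ∀ x, ∑ i, f i x • e i = x)
    {M : Type*} [AddCommGroup M] [Module R M] (z : I ⊗[R] M) :
    ∑ i, e i ⊗ₜ[R] contr (f i) M z = z := by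
  induction z with
  | zero => simp
  | tmul x y =>
    simp only [contr_tmul, TensorProduct.tmul_smul, TensorProduct.smul_tmul']
    rw [← TensorProduct.sum_tmul, h]
  | add a b ha hb => simp only [map_add, TensorProduct.tmul_add, Finset.sum_add_distrib, ha, hb]

theorem tensorInvLimMap_apply {R : Type*} [CommRing R]
    (I : Type*) [AddCommGroup I] [Module R I]
    {S : ℕ → Type*} [∀ n, AddCommGroup (S n)] [∀ n, Module R (S n)]
    (t : ∀ n, S (n + 1) →ₗ[R] S n) (z : TensorProduct R I ↥(invLim t)) (n : ℕ) :
    (tensorInvLimMap I t z).1 n =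
      LinearMap.lTensor I (LinearMap.proj n ∘ₗ (invLim t).subtype) z := by
  induction z with
  | zero => simp
  | tmul x y => simp [tensorInvLimMap]
  | add a b ha hb =>
    rw [map_add, map_add, ← ha, ← hb]
    rfl

theorem exists_dual {R : Type*} [CommRing R] (I : Type*) [AddCommGroup I] [Module R I]
    [Module.Finite R I] [Module.Projective R I] :
    ∃ (k : ℕ) (e : Fin k → I) (f : Fin k → I →ₗ[R] R), ∀ x, ∑ i, f i x • e i = x := by
  obtain ⟨k, p, q, -, -, h⟩ := Module.Finite.exists_comp_eq_id_of_projective R I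
  refine ⟨k, fun i => p (Pi.single i 1), fun i => LinearMap.proj i ∘ₗ q, fun x => ?_⟩
  have h2 : p (q x) = x := LinearMap.congr_fun h x
  conv_rhs => rw [← h2, pi_eq_sum_univ' (q x), map_sum]
  refine Finset.sum_congr rfl fun i _ => ?_
  rw [map_smul]
  rfl

/-- If `R` is a commutative Noetherian ring, `I` a finitely generated flat `R`-module, and
`(S n)` an inverse system of `R`-modules with surjective transition maps, then the canonical
map `I ⊗_R (lim S n) → lim (I ⊗_R S n)` is bijective. -/
theorem tensorInvLimMap_bijective {R : Type*} [CommRing R] [IsNoetherianRing R]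
    (I : Type*) [AddCommGroup I] [Module R I] [Module.Finite R I] [Module.Flat R I]
    {S : ℕ → Type*} [∀ n, AddCommGroup (S n)] [∀ n, Module R (S n)]
    (t : ∀ n, S (n + 1) →ₗ[R] S n) (ht : ∀ n, Function.Surjective (t n)) :
    Function.Bijective (tensorInvLimMap I t) := by
  have : Module.FinitePresentation R I := Module.finitePresentation_of_finite R I
  have : Module.Projective R I := Module.Flat.projective_of_finitePresentation
  obtain ⟨k, e, f, h⟩ := exists_dual (R := R) I
  constructor
  · rw [injective_iff_map_eq_zero]
    intro z hz
    rw [← contr_sum e f h z]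
    refine Finset.sum_eq_zero fun i _ => ?_
    have : contr (f i) _ z = 0 := by
      ext n
      have h1 := tensorInvLimMap_apply I t z n
      rw [hz] at h1
      have h2 := contr_lTensor (f i) (LinearMap.proj n ∘ₗ (invLim t).subtype) z
      rw [← h1] at h2
      exact h2.symm.trans (map_zero _)
    rw [this, TensorProduct.tmul_zero]
  · intro y
    refine ⟨∑ i, e i ⊗ₜ[R] (⟨fun n => contr (f i) _ (y.1 n), fun n => ?_⟩ : invLim t), ?_⟩
    · rw [← contr_lTensor]
      exact congrArg _ (y.2 n)
    · refine Subtype.ext (funext fun n => ?_)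
      rw [tensorInvLimMap_apply, map_sum]
      exact contr_sum e f h (y.1 n)
end

section
/- Let K be an algebraically closed field of characteristic zero, let G be a finite abelian group, and let M be a flat module over the group algebra K[G]. Then an element x ∈ M is zero if and only if, for every group homomorphism χ : G → Kˣ, the image of x under the canonical map M → M ⊗_{K[G]} K_χ is zero. -/
/-- Given a group homomorphism `χ : G → Kˣ`, the induced `K`-algebra homomorphism
`φ_χ : K[G] → K` sending each group element `g` to `χ g`. -/
noncomputable def charAlgHom (K : Type*) [CommRing K] (G : Type*) [CommGroup G]
    (χ : G →* Kˣ) : MonoidAlgebra K G →ₐ[K] K :=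
  MonoidAlgebra.lift K K G ((Units.coeHom K).comp χ)


/-- The (unnormalised) idempotent attached to `χ`. -/
noncomputable def charElt (K : Type*) [Field K] (G : Type*) [CommGroup G] [Fintype G]
    (χ : G →* Kˣ) : MonoidAlgebra K G :=
  ∑ g : G, MonoidAlgebra.single g ((χ g⁻¹ : Kˣ) : K)

theorem mul_charElt (K : Type*) [Field K] (G : Type*) [CommGroup G] [Fintype G]
    (χ : G →* Kˣ) (a : MonoidAlgebra K G) :
    a * charElt K G χ = charAlgHom K G χ a • charElt K G χ := by
  induction a using MonoidAlgebra.induction_linear with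
  | zero => simp
  | add f g hf hg => rw [add_mul, hf, hg, map_add, add_smul]
  | single h c =>
    have h1 : charAlgHom K G χ (MonoidAlgebra.single h c) = c * (χ h : K) := by
      simp [charAlgHom]
    rw [h1]
    unfold charElt
    rw [Finset.mul_sum, Finset.smul_sum]
    refine Fintype.sum_equiv (Equiv.mulLeft h) _ _ fun g => ?_
    rw [MonoidAlgebra.single_mul_single, MonoidAlgebra.smul_single]
    have h3 : ((χ h : Kˣ) : K) * ((χ (h * g)⁻¹ : Kˣ) : K) = ((χ g⁻¹ : Kˣ) : K) := by
      rw [← Units.val_mul, ← map_mul]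
      congr 2
      rw [mul_inv, mul_inv_cancel_left]
    rw [smul_eq_mul, Equiv.coe_mulLeft, mul_assoc, h3]

theorem sum_char_eq_zero (K : Type*) [Field K] [IsAlgClosed K] [CharZero K]
    (G : Type*) [CommGroup G] [Fintype G] [Fintype (G →* Kˣ)] (g : G) (hg : g ≠ 1) :
    ∑ χ : G →* Kˣ, ((χ g : Kˣ) : K) = 0 := by
  haveI : NeZero ((Monoid.exponent G : ℕ) : K) :=
    ⟨by exact_mod_cast Monoid.exponent_ne_zero_of_finite⟩
  obtain ⟨ψ, hψ⟩ := CommGroup.exists_apply_ne_one_of_hasEnoughRootsOfUnity G K hg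
  have h : ((ψ g : Kˣ) : K) * ∑ χ : G →* Kˣ, ((χ g : Kˣ) : K)
      = ∑ χ : G →* Kˣ, ((χ g : Kˣ) : K) := by
    rw [Finset.mul_sum]
    exact Fintype.sum_equiv (Equiv.mulLeft ψ) _ _ fun χ => by simp
  have h2 : (((ψ g : Kˣ) : K) - 1) * ∑ χ : G →* Kˣ, ((χ g : Kˣ) : K) = 0 := by
    rw [sub_mul, h, one_mul, sub_self]
  rcases mul_eq_zero.1 h2 with h3 | h3
  · exact absurd (Units.ext (by simpa using sub_eq_zero.1 h3)) hψ
  · exact h3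

theorem sum_single_aux (K : Type*) [Field K] (G : Type*) {ι : Type*} (s : Finset ι)
    (g : G) (f : ι → K) :
    ∑ i ∈ s, (MonoidAlgebra.single g (f i) : MonoidAlgebra K G)
      = MonoidAlgebra.single g (∑ i ∈ s, f i) :=
  (map_sum (MonoidAlgebra.singleAddHom g) f s).symm

theorem sum_charElt (K : Type*) [Field K] [IsAlgClosed K] [CharZero K]
    (G : Type*) [CommGroup G] [Fintype G] [Fintype (G →* Kˣ)] :
    ∑ χ : G →* Kˣ, charElt K G χ
      = MonoidAlgebra.single 1 (Fintype.card (G →* Kˣ) : K) := by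
  unfold charElt
  rw [Finset.sum_comm, Finset.sum_eq_single 1]
  · rw [sum_single_aux]; simp
  · intro g _ hg
    rw [sum_single_aux, sum_char_eq_zero K G g⁻¹ (by simpa using hg)]
    simp
  · simp

theorem charElt_smul_eq_zero (K : Type*) [Field K]
    (G : Type*) [CommGroup G] [Fintype G]
    (M : Type*) [AddCommGroup M] [Module (MonoidAlgebra K G) M] (x : M) (χ : G →* Kˣ)
    (h : letI : Module (MonoidAlgebra K G) K :=
        Module.compHom K (charAlgHom K G χ).toRingHom
      (x ⊗ₜ[MonoidAlgebra K G] (1 : K) : TensorProduct (MonoidAlgebra K G) M K) = 0) :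
    charElt K G χ • x = 0 := by
  letI : Module (MonoidAlgebra K G) K := Module.compHom K (charAlgHom K G χ).toRingHom
  let f : K →ₗ[MonoidAlgebra K G] MonoidAlgebra K G :=
    { toFun := fun c => c • charElt K G χ
      map_add' := fun a b => add_smul a b _
      map_smul' := fun a c => by
        change (charAlgHom K G χ a * c) • charElt K G χ = a * (c • charElt K G χ)
        rw [mul_smul_comm, mul_charElt, smul_smul, mul_comm] }
  have h2 := congrArg (fun t => TensorProduct.rid (MonoidAlgebra K G) M (f.lTensor M t)) h
  simpa [f] using h2

/-- Let `K` be an algebraically closed field of characteristic zero, `G` a finite abelian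
group, and `M` a flat module over the group algebra `K[G]`.  Then `x ∈ M` is zero if and
only if, for every group homomorphism `χ : G → Kˣ`, the image of `x` under the canonical
map `M → M ⊗_{K[G]} K_χ`, `x ↦ x ⊗ 1`, is zero; here `K_χ` is `K` viewed as a
`K[G]`-algebra via `φ_χ`. -/
theorem eq_zero_iff_forall_character_tensor_eq_zero
    (K : Type*) [Field K] [IsAlgClosed K] [CharZero K]
    (G : Type*) [CommGroup G] [Fintype G]
    (M : Type*) [AddCommGroup M] [Module (MonoidAlgebra K G) M]
    [Module.Flat (MonoidAlgebra K G) M] (x : M) :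
    x = 0 ↔ ∀ χ : G →* Kˣ,
      letI : Module (MonoidAlgebra K G) K :=
        Module.compHom K (charAlgHom K G χ).toRingHom
      (x ⊗ₜ[MonoidAlgebra K G] (1 : K) : TensorProduct (MonoidAlgebra K G) M K) = 0 := by
  constructor
  · rintro rfl χ
    letI : Module (MonoidAlgebra K G) K :=
      Module.compHom K (charAlgHom K G χ).toRingHom
    exact TensorProduct.zero_tmul _ _
  · intro h
    haveI : NeZero ((Monoid.exponent G : ℕ) : K) :=
      ⟨by exact_mod_cast Monoid.exponent_ne_zero_of_finite⟩
    haveI : Finite (G →* Kˣ) := Nat.finite_of_card_ne_zero (by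
      rw [CommGroup.card_monoidHom_of_hasEnoughRootsOfUnity G K]
      exact Nat.card_pos.ne')
    letI : Fintype (G →* Kˣ) := Fintype.ofFinite _
    have h1 : (MonoidAlgebra.single 1 (Fintype.card (G →* Kˣ) : K) : MonoidAlgebra K G) • x = 0 := by
      rw [← sum_charElt, Finset.sum_smul]
      exact Finset.sum_eq_zero fun χ _ => charElt_smul_eq_zero K G M x χ (h χ)
    have h0 : (Fintype.card (G →* Kˣ) : K) ≠ 0 := by
      exact_mod_cast Fintype.card_ne_zero
    have h2 := congrArg
      (fun y => (MonoidAlgebra.single 1 (Fintype.card (G →* Kˣ) : K)⁻¹ : MonoidAlgebra K G) • y) h1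
    simp only [smul_zero, smul_smul, MonoidAlgebra.single_mul_single, mul_one,
      inv_mul_cancel₀ h0] at h2
    rwa [← MonoidAlgebra.one_def, one_smul] at h2
end

section
/- Let a, b, d be natural numbers with a ≥ 1 satisfying a² = d·b² + 1. Then, in the real numbers, (√((a+1)/2) + √((a−1)/2))² = a + b·√d. -/
/-- If `a ≥ 1` and `a² = d·b² + 1` for natural numbers `a, b, d`, then in the real numbers
`(√((a+1)/2) + √((a−1)/2))² = a + b·√d`. -/
theorem sq_sqrt_add_sqrt_eq (a b d : ℕ) (ha : 1 ≤ a) (h : a ^ 2 = d * b ^ 2 + 1) :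
    (Real.sqrt (((a : ℝ) + 1) / 2) + Real.sqrt (((a : ℝ) - 1) / 2)) ^ 2
      = (a : ℝ) + (b : ℝ) * Real.sqrt d := by
  have ha' : (1 : ℝ) ≤ a := by exact_mod_cast ha
  have h' : (a : ℝ) ^ 2 = d * b ^ 2 + 1 := by exact_mod_cast h
  have h1 : (0 : ℝ) ≤ ((a : ℝ) + 1) / 2 := by linarith
  have h2 : (0 : ℝ) ≤ ((a : ℝ) - 1) / 2 := by linarith
  have key : Real.sqrt (((a : ℝ) + 1) / 2) * Real.sqrt (((a : ℝ) - 1) / 2)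
      = (b : ℝ) * Real.sqrt d / 2 := by
    rw [← Real.sqrt_mul h1, Real.sqrt_eq_iff_mul_self_eq (mul_nonneg h1 h2) (by positivity)]
    have hd := Real.mul_self_sqrt (Nat.cast_nonneg (α := ℝ) d)
    linear_combination h' / 4 - (b : ℝ) ^ 2 / 4 * hd
  rw [add_sq, Real.sq_sqrt h1, Real.sq_sqrt h2]
  linear_combination 2 * key
end
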